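/- Let f : 𝕊 → 𝕊 be a circle map with h_top(f) = 0 and with a fixed point, and let F be a lifting of f and I ⊂ ℝ a closed interval with 1 ≤ |I| < 2 and F(I) ⊆ I as provided by the lifting lemma. Then (𝕊,f) is topological null if and only if (I, F|_I) is topological null. -/

import Mathlib

/-!
The projection `π : I → 𝕊` is a factor map, so nullness of `G` passes to `f` at once. Conversely,
since `a` and `a + 1` both lie in `I` and `|I| < 2`, the degree `d` of `F` is `-1`, `0` or `1`.

If `d = 0`, then `G` factors through `π`, and the join for `G` at times `tᵢ` is pulled back from a
join for `f` at times `tᵢ - 1` (`IsNull.of_factor_through`).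

If `d = ±1`, fibres of `π` have at most two points `x`, `x + 1`. Suppose that each such pair has
neighbourhoods `A`, `B` such that orbits of `g = F²` never lead from `A` to `B`, or never from `B`
to `A`. Then along a given itinerary of the circle the choice of the point of the fibre changes at
most once for each small arc and each parity of the time, so that the complexity of `G` exceeds that
of `f` by a polynomial factor only (`IsNull.lift`). When `|I| > 1` the one-way property follows from
invariance of `[a,b-1]` and `[a+1,b]` under `g`. When `b = a + 1`, these are the fixed endpoints. If
orbits cross between every pair of neighbourhoods of them in both directions, then some iterate of
`g` has a horseshoe (`Crossing.horse`):
* if `g c = a` with `a < c < b`, it is built from `c` and orbits escaping from `a`, and similarly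
  with `a` and `b` exchanged;
* otherwise fixed points accumulate at both endpoints, and two of them bound an interval `[p,q]`
  through which every crossing passes; the images of `[p,q]` exhaust `(a,b)`, and intervals on
  either side of it are stretched over it.

The horseshoe projects to a horseshoe of an iterate of `f`, whose `2ⁿ` itineraries along an
arithmetic progression contradict nullness (`not_null_of_horseshoe`).
-/

open Set Filter Topology ENNReal

noncomputable section

/-- The circle `𝕊 = ℝ / ℤ`, identified with `{z ∈ ℂ : |z| = 1}` via `x ↦ exp(2πix)`. -/
abbrev Circle1 : Type := AddCircle (1 : ℝ)

/-- The natural projection `e : ℝ → 𝕊`, `e(x) = exp(2πix)`. -/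
def projS : ℝ → Circle1 := fun x => (x : Circle1)

/-- `𝒰` is an open cover of `X`. -/
def IsOpenCover {X : Type*} [TopologicalSpace X] (U : Set (Set X)) : Prop :=
  (∀ A ∈ U, IsOpen A) ∧ ⋃₀ U = univ

/-- `N(𝒰)`: the minimal cardinality of a subcover of `𝒰`. -/
def coverN {X : Type*} (U : Set (Set X)) : ℕ :=
  sInf {n | ∃ V : Finset (Set X), ↑V ⊆ U ∧ ⋃₀ (V : Set (Set X)) = univ ∧ V.card = n}

/-- The join `⋁_{i} f^{-t i} 𝒰` of preimages of a cover along a finite sequence of times. -/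
def timeJoin {X : Type*} (f : X → X) (U : Set (Set X)) {n : ℕ} (t : Fin n → ℕ) :
    Set (Set X) :=
  {A | ∃ u : Fin n → Set X, (∀ i, u i ∈ U) ∧ A = ⋂ i, f^[t i] ⁻¹' u i}

/-- Topological entropy of `f` with respect to the cover `𝒰`:
`lim (1/n) log N(⋁_{i=1}^n f^{-i} 𝒰)`. -/
def coverEnt {X : Type*} (f : X → X) (U : Set (Set X)) : ℝ≥0∞ :=
  Filter.limsup
    (fun n : ℕ =>
      ENNReal.ofReal (Real.log (coverN (timeJoin f U (fun i : Fin n => (i : ℕ) + 1))) / n))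
    Filter.atTop

/-- Topological entropy `h_top(f)`. -/
def topEnt {X : Type*} [TopologicalSpace X] (f : X → X) : ℝ≥0∞ :=
  ⨆ U ∈ {U : Set (Set X) | IsOpenCover U}, coverEnt f U

/-- Topological sequence entropy of `f` along the sequence `a` with respect to the cover `𝒰`. -/
def seqEnt {X : Type*} (f : X → X) (a : ℕ → ℕ) (U : Set (Set X)) : ℝ≥0∞ :=
  Filter.limsup
    (fun n : ℕ =>
      ENNReal.ofReal (Real.log (coverN (timeJoin f U (fun i : Fin n => a (i : ℕ)))) / n))
    Filter.atTop

/-- `(X,f)` is topological null: the sequence entropy along every increasing sequence of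
positive integers vanishes. -/
def IsNull {X : Type*} [TopologicalSpace X] (f : X → X) : Prop :=
  ∀ a : ℕ → ℕ, StrictMono a → (∀ n, 0 < a n) →
    ∀ U : Set (Set X), IsOpenCover U → seqEnt f a U = 0

/-- The maximal pattern complexity `p*_{X,𝒰}(n)`. -/
def patternComp {X : Type*} (f : X → X) (U : Set (Set X)) (n : ℕ) : ℕ :=
  sSup {m | ∃ t : Fin n → ℕ, m = coverN (timeJoin f U t)}

/-- A function `q : ℕ → ℕ` is of polynomial order: `q(n) ≤ C n^C` for some constant `C > 0`. -/
def PolyOrder (q : ℕ → ℕ) : Prop :=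
  ∃ C : ℝ, 0 < C ∧ ∀ n : ℕ, 1 ≤ n → (q n : ℝ) ≤ C * (n : ℝ) ^ C

/-- The ω-limit set `ω(x,f) = ⋂_n closure {f^i(x) : i ≥ n}`. -/
def omegaSet {X : Type*} [TopologicalSpace X] (f : X → X) (x : X) : Set X :=
  ⋂ n : ℕ, closure {y | ∃ i, n ≤ i ∧ f^[i] x = y}

/-- `I` is an independence set for the pair of sets `{U, V}`. -/
def IsIndepSet {X : Type*} (f : X → X) (U V : Set X) (I : Set ℕ) : Prop :=
  ∀ J : Finset ℕ, ↑J ⊆ I → J.Nonempty →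
    ∀ S : ℕ → Bool, (⋂ i ∈ J, f^[i] ⁻¹' (if S i then U else V)).Nonempty

/-- `⟨x,y⟩` is an IN-pair: every pair of neighborhoods has arbitrarily large finite
independence sets. -/
def IsINPair {X : Type*} [TopologicalSpace X] (f : X → X) (x y : X) : Prop :=
  ∀ U ∈ nhds x, ∀ V ∈ nhds y, ∀ m : ℕ, ∃ J : Finset ℕ, m ≤ J.card ∧ IsIndepSet f U V ↑J

/-- `⟨x,y⟩` is an IT-pair: every pair of neighborhoods has an infinite independence set. -/
def IsITPair {X : Type*} [TopologicalSpace X] (f : X → X) (x y : X) : Prop :=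
  ∀ U ∈ nhds x, ∀ V ∈ nhds y, ∃ I : Set ℕ, I.Infinite ∧ IsIndepSet f U V I

/-- A closed nondegenerate proper subinterval (arc) of the circle. -/
def IsClosedArc (J : Set Circle1) : Prop :=
  ∃ c d : ℝ, c < d ∧ d - c < 1 ∧ J = projS '' Icc c d

/-- A closed nondegenerate subinterval of a linearly ordered space. -/
def IsClosedSubInt {X : Type*} [Preorder X] (J : Set X) : Prop :=
  ∃ c d : X, c < d ∧ J = Icc c d

/-- `J, f(J), …, f^{n-1}(J)` are pairwise disjoint and `f^n(J) = J`. -/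
def IsPeriodicSet {X : Type*} (f : X → X) (J : Set X) (n : ℕ) : Prop :=
  0 < n ∧ (∀ i j, i < j → j < n → Disjoint (f^[i] '' J) (f^[j] '' J)) ∧ f^[n] '' J = J

/-- `⟨x,y⟩` is a separable pair: `x` and `y` lie in two disjoint periodic intervals
(`isInt` is the notion of closed nondegenerate subinterval of the phase space). -/
def SeparablePair {X : Type*} (isInt : Set X → Prop) (f : X → X) (x y : X) : Prop :=
  ∃ J₁ J₂ : Set X, ∃ n₁ n₂ : ℕ,
    isInt J₁ ∧ IsPeriodicSet f J₁ n₁ ∧ isInt J₂ ∧ IsPeriodicSet f J₂ n₂ ∧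
    Disjoint J₁ J₂ ∧ x ∈ J₁ ∧ y ∈ J₂

/-- `⟨x,y⟩` is a non-separable pair. -/
def NonSeparablePair {X : Type*} [TopologicalSpace X] (isInt : Set X → Prop)
    (f : X → X) (x y : X) : Prop :=
  x ≠ y ∧ (∃ z, x ∈ omegaSet f z ∧ y ∈ omegaSet f z) ∧ ¬ SeparablePair isInt f x y

/-- `F` is a lifting of the circle map `f`. -/
def IsLift (f : Circle1 → Circle1) (F : ℝ → ℝ) : Prop :=
  Continuous F ∧ ∀ x : ℝ, projS (F x) = f (projS x)

/-- `Per(f) ≠ ∅`. -/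
def HasPeriodicPt {X : Type*} (f : X → X) : Prop :=
  ∃ y, ∃ q : ℕ, 0 < q ∧ f^[q] y = y

/-- `E` is an `(A,n,ε)`-spanning set. -/
def IsSpanningSet {X : Type*} [PseudoMetricSpace X] (f : X → X) (a : ℕ → ℕ) (n : ℕ)
    (ε : ℝ) (E : Set X) : Prop :=
  ∀ x : X, ∃ y ∈ E, ∀ i : Fin n, dist (f^[a (i : ℕ)] x) (f^[a (i : ℕ)] y) < ε

/-- `r_A(n,ε)`: minimal cardinality of an `(A,n,ε)`-spanning set. -/
def spanNum {X : Type*} [PseudoMetricSpace X] (f : X → X) (a : ℕ → ℕ) (n : ℕ) (ε : ℝ) : ℕ :=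
  sInf {m | ∃ E : Finset X, IsSpanningSet f a n ε ↑E ∧ E.card = m}

/-- `r*(n,ε) = sup_A r_A(n,ε)` over all increasing sequences `A`. -/
def rStar {X : Type*} [PseudoMetricSpace X] (f : X → X) (n : ℕ) (ε : ℝ) : ℕ :=
  sSup {m | ∃ a : ℕ → ℕ, StrictMono a ∧ m = spanNum f a n ε}

/-- `E` is an `(A,n,ε)`-separated set. -/
def IsSeparatedSet {X : Type*} [PseudoMetricSpace X] (f : X → X) (a : ℕ → ℕ) (n : ℕ)
    (ε : ℝ) (E : Set X) : Prop :=
  ∀ x ∈ E, ∀ y ∈ E, x ≠ y → ∃ i : Fin n, ε ≤ dist (f^[a (i : ℕ)] x) (f^[a (i : ℕ)] y)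

/-- `s_A(n,ε)`: maximal cardinality of an `(A,n,ε)`-separated set. -/
def sepNum {X : Type*} [PseudoMetricSpace X] (f : X → X) (a : ℕ → ℕ) (n : ℕ) (ε : ℝ) : ℕ :=
  sSup {m | ∃ E : Finset X, IsSeparatedSet f a n ε ↑E ∧ E.card = m}

/-- `s*(n,ε) = sup_A s_A(n,ε)` over all increasing sequences `A`. -/
def sStar {X : Type*} [PseudoMetricSpace X] (f : X → X) (n : ℕ) (ε : ℝ) : ℕ :=
  sSup {m | ∃ a : ℕ → ℕ, StrictMono a ∧ m = sepNum f a n ε}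

/-! ### Two-sided crossings between fixed endpoints force a horseshoe -/

/-- A continuous self-map `g` of `[a,b]` fixing both endpoints, for which orbits starting
arbitrarily close to either endpoint (but not at it) come arbitrarily close to the other. -/
structure Crossing (g : ℝ → ℝ) (a b : ℝ) : Prop where
  lt : a < b
  cont : Continuous g
  maps : MapsTo g (Icc a b) (Icc a b)
  fixa : g a = a
  fixb : g b = b
  up : ∀ p q, a < p → q < b → ∃ u m, a < u ∧ u < p ∧ q < g^[m] u
  down : ∀ p q, a < p → q < b → ∃ v m, q < v ∧ v < b ∧ g^[m] v < p

/-- Some positive iterate of `g` stretches each of two disjoint subintervals of `[a,b]` over their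
common convex hull `[c₁,d₂]`. That hull is not all of `[a,b]`, so that for `b = a + 1` the two
intervals remain disjoint on the circle. -/
def Horse (g : ℝ → ℝ) (a b : ℝ) : Prop :=
  ∃ c₁ d₁ c₂ d₂ : ℝ, ∃ m : ℕ, 0 < m ∧ a ≤ c₁ ∧ c₁ ≤ d₁ ∧ d₁ < c₂ ∧ c₂ ≤ d₂ ∧ d₂ ≤ b ∧
    (a < c₁ ∨ d₂ < b) ∧ Icc c₁ d₂ ⊆ g^[m] '' Icc c₁ d₁ ∧ Icc c₁ d₂ ⊆ g^[m] '' Icc c₂ d₂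

/-- The conjugate of `g` by the reflection of `[a,b]` in its midpoint. -/
def reflMap (g : ℝ → ℝ) (a b : ℝ) : ℝ → ℝ := fun x => a + b - g (a + b - x)

lemma reflMap_iterate (g : ℝ → ℝ) (a b : ℝ) (m : ℕ) (x : ℝ) :
    (reflMap g a b)^[m] x = a + b - g^[m] (a + b - x) := by
  induction m generalizing x with
  | zero => simp
  | succ m ih =>
    rw [Function.iterate_succ_apply, ih, Function.iterate_succ_apply]
    simp [reflMap]

lemma Crossing.refl {g : ℝ → ℝ} {a b : ℝ} (h : Crossing g a b) :
    Crossing (reflMap g a b) a b where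
  lt := h.lt
  cont := by
    have := h.cont
    unfold reflMap
    fun_prop
  maps := by
    intro x hx
    have := h.maps (x := a + b - x) ⟨by linarith [hx.2], by linarith [hx.1]⟩
    exact ⟨by simp only [reflMap]; linarith [this.2], by simp only [reflMap]; linarith [this.1]⟩
  fixa := by simp [reflMap, h.fixb]
  fixb := by simp [reflMap, h.fixa]
  up := by
    intro p q hp hq
    obtain ⟨v, m, h1, h2, h3⟩ := h.down (a + b - q) (a + b - p) (by linarith) (by linarith)
    refine ⟨a + b - v, m, by linarith, by linarith, ?_⟩
    rw [reflMap_iterate, _root_.sub_sub_cancel]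
    linarith
  down := by
    intro p q hp hq
    obtain ⟨v, m, h1, h2, h3⟩ := h.up (a + b - q) (a + b - p) (by linarith) (by linarith)
    refine ⟨a + b - v, m, by linarith, by linarith, ?_⟩
    rw [reflMap_iterate, _root_.sub_sub_cancel]
    linarith

lemma Horse.of_refl {g : ℝ → ℝ} {a b : ℝ} (h : Horse (reflMap g a b) a b) : Horse g a b := by
  obtain ⟨c₁, d₁, c₂, d₂, m, hm, h1, h2, h3, h4, h5, h6, h7, h8⟩ := h
  have key : ∀ c d : ℝ, Icc c₁ d₂ ⊆ (reflMap g a b)^[m] '' Icc c d →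
      Icc (a + b - d₂) (a + b - c₁) ⊆ g^[m] '' Icc (a + b - d) (a + b - c) := by
    intro c d hcd y hy
    obtain ⟨x, hx, hxy⟩ := hcd (⟨by linarith [hy.2], by linarith [hy.1]⟩ :
      a + b - y ∈ Icc c₁ d₂)
    rw [reflMap_iterate] at hxy
    exact ⟨a + b - x, ⟨by linarith [hx.2], by linarith [hx.1]⟩, by linarith⟩
  refine ⟨a + b - d₂, a + b - c₂, a + b - d₁, a + b - c₁, m, hm, by linarith, by linarith,
    by linarith, by linarith, by linarith, ?_, key _ _ h8, key _ _ h7⟩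
  rcases h6 with h6 | h6
  · right; linarith
  · left; linarith

lemma iterate_fix {g : ℝ → ℝ} {a : ℝ} (h : g a = a) (m : ℕ) : g^[m] a = a :=
  Function.iterate_fixed h m

lemma iterate_cover {g : ℝ → ℝ} (hg : Continuous g) (m : ℕ) {x y : ℝ} {s : Set ℝ}
    (hs : Icc x y ⊆ s) (hxy : x ≤ y) : Icc (g^[m] x) (g^[m] y) ⊆ g^[m] '' s :=
  (intermediate_value_Icc hxy (hg.iterate m).continuousOn).trans (image_mono hs)

/-- If an interior point is mapped to the fixed endpoint `a`, orbits escaping from `a` towards `b`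
already produce a horseshoe. -/
lemma horse_of_hit_a {g : ℝ → ℝ} {a b : ℝ} (h : Crossing g a b) {c : ℝ} (hac : a < c)
    (hcb : c < b) (hc : g c = a) : Horse g a b := by
  have hg := h.cont
  by_cases hd : ∃ d, c < d ∧ d < b ∧ d ≤ g d
  · -- `[c,d]` covers `[a,d]` from the first iterate on; a short interval at `a` does so later.
    obtain ⟨d, hcd, hdb, hgd⟩ := hd
    have h1 : Icc a d ⊆ g '' Icc c d := by
      refine Subset.trans ?_ (intermediate_value_Icc hcd.le hg.continuousOn)
      rw [hc]; exact Icc_subset_Icc_right hgd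
    have h2 : ∀ m : ℕ, Icc a d ⊆ g^[m + 1] '' Icc c d := by
      intro m
      induction m with
      | zero => simpa using h1
      | succ m ih =>
        rw [Function.iterate_succ, image_comp]
        exact ih.trans (image_mono ((Icc_subset_Icc_left hac.le).trans h1))
    obtain ⟨u, m, hau, huc, hum⟩ := h.up c d hac hdb
    have hm : m ≠ 0 := by
      rintro rfl
      simp at hum
      linarith
    obtain ⟨k, rfl⟩ := Nat.exists_eq_succ_of_ne_zero hm
    refine ⟨a, u, c, d, k + 1, Nat.succ_pos _, le_rfl, hau.le, huc, hcd.le, hdb.le, Or.inr hdb,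
      ?_, h2 k⟩
    have := iterate_cover hg (k + 1) (Subset.refl (Icc a u)) hau.le
    rw [iterate_fix h.fixa] at this
    exact (Icc_subset_Icc_right hum.le).trans this
  · push Not at hd
    obtain ⟨M, hM, hMmax⟩ := isCompact_Icc.exists_isMaxOn (nonempty_Icc.2 hac.le)
      (hg.continuousOn (s := Icc a c))
    have hMb : g M ≤ b := (h.maps ⟨hM.1, hM.2.trans hcb.le⟩).2
    rcases hMb.lt_or_eq with hMb | hMb
    · -- `[a, max c (g M)]` would be invariant.
      exfalso
      set B := max c (g M) with hB
      have hBb : B < b := max_lt hcb hMb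
      have hinv : MapsTo g (Icc a B) (Icc a B) := by
        intro y hy
        refine ⟨(h.maps ⟨hy.1, hy.2.trans hBb.le⟩).1, ?_⟩
        by_cases hyc : y ≤ c
        · exact (hMmax ⟨hy.1, hyc⟩).trans (le_max_right _ _)
        · exact (hd y (not_le.1 hyc) (hy.2.trans_lt hBb)).le.trans hy.2
      obtain ⟨u, m, hau, huc, hum⟩ := h.up B B (hac.trans_le (le_max_left _ _)) hBb
      exact absurd (hinv.iterate m ⟨hau.le, huc.le⟩).2 (not_le.2 hum)
    · -- here `M ↦ b` and `c ↦ a`, so `[a,M]` and `[M,c]` both cover `[a,b]`.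
      have haM : a < M := by
        refine hM.1.lt_of_ne ?_
        rintro rfl
        rw [h.fixa] at hMb; linarith [h.lt]
      have hMc : M < c := by
        refine hM.2.lt_of_ne ?_
        rintro rfl
        rw [hc] at hMb; linarith [h.lt]
      obtain ⟨r, hr, hrc⟩ : c ∈ g '' Icc a M := by
        apply intermediate_value_Icc haM.le hg.continuousOn
        rw [h.fixa, hMb]; exact ⟨hac.le, hcb.le⟩
      have hrM : r < M := by
        refine hr.2.lt_of_ne ?_
        rintro rfl
        linarith
      refine ⟨a, r, M, c, 1, one_pos, le_rfl, hr.1, hrM, hMc.le, hcb.le, Or.inr hcb, ?_, ?_⟩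
      · have := intermediate_value_Icc hr.1 (hg.continuousOn (s := Icc a r))
        rwa [h.fixa, hrc] at this
      · have := intermediate_value_Icc' hMc.le (hg.continuousOn (s := Icc M c))
        rw [hc, hMb] at this
        exact (Icc_subset_Icc_right hcb.le).trans this

/-- If the endpoint `b` is only reached from `b`, then fixed points accumulate at `b`: the graph
must cross the diagonal infinitely often there, since otherwise some `[x,b]` or `[a,x]` would be
invariant. -/
lemma exists_fixed_near_b {g : ℝ → ℝ} {a b : ℝ} (h : Crossing g a b)
    (hb : ∀ c, a < c → c < b → g c < b) {x : ℝ} (hax : a < x) (hxb : x < b) :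
    ∃ q, x < q ∧ q < b ∧ g q = q := by
  have hg := h.cont
  obtain ⟨y, hxy, hyb, hgy⟩ : ∃ y, x < y ∧ y < b ∧ g y < y := by
    by_contra! hcon
    obtain ⟨x', hxx', hxb'⟩ := exists_between hxb
    have hinv : MapsTo g (Icc x' b) (Icc x' b) := by
      intro y hy
      refine ⟨?_, (h.maps ⟨by linarith [hy.1], hy.2⟩).2⟩
      rcases hy.2.lt_or_eq with hyb | rfl
      · exact hy.1.trans (hcon y (hxx'.trans_le hy.1) hyb)
      · rw [h.fixb]; exact hxb'.le
    obtain ⟨v, m, h1, h2, h3⟩ := h.down x' x' (by linarith) hxb'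
    exact absurd (hinv.iterate m ⟨h1.le, h2.le⟩).1 (not_le.2 h3)
  obtain ⟨z, hxz, hzb, hgz⟩ : ∃ z, x < z ∧ z < b ∧ z < g z := by
    by_contra! hcon
    obtain ⟨M, hM, hMmax⟩ := isCompact_Icc.exists_isMaxOn (nonempty_Icc.2 hax.le)
      (hg.continuousOn (s := Icc a x))
    have hMb : g M < b := by
      rcases hM.1.lt_or_eq with haM | rfl
      · exact hb M haM (hM.2.trans_lt hxb)
      · rw [h.fixa]; exact h.lt
    set B := max x (g M) with hB
    have hBb : B < b := max_lt hxb hMb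
    have hinv : MapsTo g (Icc a B) (Icc a B) := by
      intro y hy
      refine ⟨(h.maps ⟨hy.1, hy.2.trans hBb.le⟩).1, ?_⟩
      by_cases hyc : y ≤ x
      · exact (hMmax ⟨hy.1, hyc⟩).trans (le_max_right _ _)
      · exact (hcon y (not_le.1 hyc) (hy.2.trans_lt hBb)).trans hy.2
    obtain ⟨u, m, hau, huc, hum⟩ := h.up B B (hax.trans_le (le_max_left _ _)) hBb
    exact absurd (hinv.iterate m ⟨hau.le, huc.le⟩).2 (not_le.2 hum)
  have hsub : uIcc y z ⊆ Ioo x b := (ordConnected_Ioo).uIcc_subset ⟨hxy, hyb⟩ ⟨hxz, hzb⟩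
  obtain ⟨q, hq, hq0⟩ : (0 : ℝ) ∈ (fun t => g t - t) '' uIcc y z := by
    apply intermediate_value_uIcc (hg.sub continuous_id).continuousOn
    exact Icc_subset_uIcc ⟨by simp; linarith, by simp; linarith⟩
  exact ⟨q, (hsub hq).1, (hsub hq).2, by simp at hq0; linarith⟩

/-- If points of `[a,p]` cannot jump over `[p,q]` in one step, then an orbit crossing from the left
of `q` to its right visits `[p,q]`. -/
lemma passes_up {g : ℝ → ℝ} {a b p q : ℝ} (hmaps : MapsTo g (Icc a b) (Icc a b))
    (hleft : ∀ y ∈ Icc a b, y ≤ p → g y < q) (m : ℕ) (u : ℝ) (hab : u ∈ Icc a b) (hu : u ≤ q)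
    (hm : q < g^[m] u) : ∃ z ∈ Icc p q, ∃ k, g^[k] z = g^[m] u := by
  induction m generalizing u with
  | zero => exact absurd hm (not_lt.2 hu)
  | succ m ih =>
    by_cases hp : p ≤ u
    · exact ⟨u, ⟨hp, hu⟩, _, rfl⟩
    · rw [Function.iterate_succ_apply] at hm ⊢
      exact ih (g u) (hmaps hab) (hleft u hab (not_le.1 hp).le).le hm

lemma passes_down {g : ℝ → ℝ} {a b p q : ℝ} (hmaps : MapsTo g (Icc a b) (Icc a b))
    (hright : ∀ y ∈ Icc a b, q ≤ y → p < g y) (m : ℕ) (v : ℝ) (hab : v ∈ Icc a b) (hv : p ≤ v)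
    (hm : g^[m] v < p) : ∃ z ∈ Icc p q, ∃ k, g^[k] z = g^[m] v := by
  induction m generalizing v with
  | zero => exact absurd hm (not_lt.2 hv)
  | succ m ih =>
    by_cases hq : v ≤ q
    · exact ⟨v, ⟨hv, hq⟩, _, rfl⟩
    · rw [Function.iterate_succ_apply] at hm ⊢
      exact ih (g v) (hmaps hab) (hright v hab (not_le.1 hq).le).le hm

/-- If neither endpoint has an interior preimage, take fixed points `p < q` so close to the
endpoints that every crossing passes through `K = [p,q]`. The images of `K` increase and exhaust
`(a,b)`, while intervals `[u,p]` and `[q,v]` are eventually stretched over `K`. -/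
lemma horse_of_not_hit {g : ℝ → ℝ} {a b : ℝ} (h : Crossing g a b)
    (ha : ∀ c, a < c → c < b → a < g c) (hb : ∀ c, a < c → c < b → g c < b) : Horse g a b := by
  have hg := h.cont
  obtain ⟨x, hax, hxb⟩ := exists_between h.lt
  obtain ⟨M, hM, hMmax⟩ := isCompact_Icc.exists_isMaxOn (nonempty_Icc.2 hax.le)
    (hg.continuousOn (s := Icc a x))
  have hMb : g M < b := by
    rcases hM.1.lt_or_eq with haM | rfl
    · exact hb M haM (hM.2.trans_lt hxb)
    · rw [h.fixa]; exact h.lt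
  obtain ⟨N, hN, hNmin⟩ := isCompact_Icc.exists_isMinOn (nonempty_Icc.2 hxb.le)
    (hg.continuousOn (s := Icc x b))
  have hNa : a < g N := by
    rcases hN.2.lt_or_eq with hNb | rfl
    · exact ha N (hax.trans_le hN.1) hNb
    · rw [h.fixb]; exact h.lt
  obtain ⟨q, hq1, hqb, hgq⟩ := exists_fixed_near_b h hb (x := max x (g M))
    (lt_max_of_lt_left hax) (max_lt hxb hMb)
  obtain ⟨p, hp1, hap, hgp⟩ : ∃ p, p < min x (g N) ∧ a < p ∧ g p = p := by
    obtain ⟨p, h1, h2, h3⟩ := exists_fixed_near_b h.refl (x := a + b - min x (g N))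
      (fun c hc1 hc2 => by
        have := ha (a + b - c) (by linarith) (by linarith)
        simp only [reflMap]; linarith)
      (by have := min_le_left x (g N); linarith) (by have := lt_min hax hNa; linarith)
    simp only [reflMap] at h3
    exact ⟨a + b - p, by linarith, by linarith, by linarith⟩
  have hxq : x < q := (le_max_left _ _).trans_lt hq1
  have hpx : p < x := hp1.trans_le (min_le_left _ _)
  have hleft : ∀ y ∈ Icc a b, y ≤ p → g y < q := fun y hy hyp =>
    (hMmax ⟨hy.1, hyp.trans hpx.le⟩).trans_lt ((le_max_right _ _).trans_lt hq1)
  have hright : ∀ y ∈ Icc a b, q ≤ y → p < g y := fun y hy hyq =>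
    (hp1.trans_le (min_le_right _ _)).trans_le (hNmin ⟨hxq.le.trans hyq, hy.2⟩)
  have hpq : p < q := hpx.trans hxq
  have hqa : a < q := hap.trans hpq
  have hpb : p < b := hpq.trans hqb
  have hKinc : ∀ k : ℕ, Icc p q ⊆ g^[k] '' Icc p q := by
    intro k
    have := iterate_cover hg k (Subset.refl (Icc p q)) hpq.le
    rwa [iterate_fix hgp, iterate_fix hgq] at this
  have hKmono : ∀ k l : ℕ, k ≤ l → g^[k] '' Icc p q ⊆ g^[l] '' Icc p q := by
    intro k l hkl
    obtain ⟨j, rfl⟩ := Nat.exists_eq_add_of_le hkl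
    rw [Function.iterate_add, image_comp]
    exact image_mono (hKinc j)
  obtain ⟨u, m, hau, hup, hum⟩ := h.up p q hap hqb
  obtain ⟨v, m', hqv, hvb, hvm⟩ := h.down p q hap hqb
  have hlow : ∃ k, ∃ y ∈ g^[k] '' Icc p q, y < u := by
    obtain ⟨w, j, h1, h2, h3⟩ := h.down u q hau hqb
    obtain ⟨z, hz, k, hk⟩ := passes_down h.maps hright j w ⟨(hqa.trans h1).le, h2.le⟩
      (hpq.trans h1).le (h3.trans hup)
    exact ⟨k, _, mem_image_of_mem _ hz, hk ▸ h3⟩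
  have hhigh : ∃ k, ∃ y ∈ g^[k] '' Icc p q, v < y := by
    obtain ⟨w, j, h1, h2, h3⟩ := h.up p v hap hvb
    obtain ⟨z, hz, k, hk⟩ := passes_up h.maps hleft j w ⟨h1.le, (h2.trans hpb).le⟩
      (h2.trans hpq).le (hqv.trans h3)
    exact ⟨k, _, mem_image_of_mem _ hz, hk ▸ h3⟩
  obtain ⟨k₁, y₁, hy₁, hy₁u⟩ := hlow
  obtain ⟨k₂, y₂, hy₂, hy₂v⟩ := hhigh
  have hcov : ∀ k, k₁ ≤ k → k₂ ≤ k → Icc u v ⊆ g^[k] '' Icc p q := by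
    intro k h1 h2
    have hoc : OrdConnected (g^[k] '' Icc p q) :=
      (isPreconnected_Icc.image _ (hg.iterate k).continuousOn).ordConnected
    exact (Icc_subset_Icc hy₁u.le hy₂v.le).trans
      (hoc.out (hKmono _ _ h1 hy₁) (hKmono _ _ h2 hy₂))
  have hm : 0 < m := by
    rcases Nat.eq_zero_or_pos m with rfl | hm
    · simp at hum; linarith
    · exact hm
  have c1 : Icc p q ⊆ g^[m] '' Icc u p := by
    have h2 := intermediate_value_uIcc (a := u) (b := p) (hg.iterate m).continuousOn
    rw [iterate_fix hgp, uIcc_of_ge (hpq.trans hum).le, uIcc_of_le hup.le] at h2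
    exact (Icc_subset_Icc_right hum.le).trans h2
  have c2 : Icc p q ⊆ g^[m'] '' Icc q v := by
    have h2 := intermediate_value_uIcc (a := q) (b := v) (hg.iterate m').continuousOn
    rw [iterate_fix hgq, uIcc_of_ge (hvm.trans hpq).le, uIcc_of_le hqv.le] at h2
    exact (Icc_subset_Icc_left hvm.le).trans h2
  -- a common number of steps works for both intervals because the images of `K` increase
  refine ⟨u, p, q, v, (m + m' + k₁ + k₂), by omega, hau.le, hup.le, hpq, hqv.le, hvb.le,
    Or.inl hau, ?_, ?_⟩
  · rw [show m + m' + k₁ + k₂ = (m' + k₁ + k₂) + m by ring, Function.iterate_add, image_comp]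
    exact (hcov _ (by omega) (by omega)).trans (image_mono c1)
  · rw [show m + m' + k₁ + k₂ = (m + k₁ + k₂) + m' by ring, Function.iterate_add, image_comp]
    exact (hcov _ (by omega) (by omega)).trans (image_mono c2)

theorem Crossing.horse {g : ℝ → ℝ} {a b : ℝ} (h : Crossing g a b) : Horse g a b := by
  by_cases ha : ∃ c, a < c ∧ c < b ∧ g c = a
  · obtain ⟨c, h1, h2, h3⟩ := ha
    exact horse_of_hit_a h h1 h2 h3
  by_cases hb : ∃ c, a < c ∧ c < b ∧ g c = b
  · obtain ⟨c, h1, h2, h3⟩ := hb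
    refine Horse.of_refl (horse_of_hit_a h.refl (c := a + b - c) (by linarith) (by linarith) ?_)
    simp [reflMap, h3]
  push Not at ha hb
  exact horse_of_not_hit h
    (fun c h1 h2 => (h.maps ⟨h1.le, h2.le⟩).1.lt_of_ne (ha c h1 h2).symm)
    (fun c h1 h2 => (h.maps ⟨h1.le, h2.le⟩).2.lt_of_ne (hb c h1 h2))

/-! ### Minimal subcovers of joins and vanishing sequence entropy -/

lemma coverN_le {X : Type*} {U : Set (Set X)} (V : Finset (Set X)) (hV : ↑V ⊆ U)
    (hc : ⋃₀ (V : Set (Set X)) = univ) : coverN U ≤ V.card :=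
  Nat.sInf_le ⟨V, hV, hc, rfl⟩

lemma IsOpenCover.exists_finset {X : Type*} [TopologicalSpace X] [CompactSpace X]
    {U : Set (Set X)} (hU : IsOpenCover U) :
    ∃ V : Finset (Set X), ↑V ⊆ U ∧ ⋃₀ (V : Set (Set X)) = univ := by
  obtain ⟨T, hT, hfin, hcov⟩ := isCompact_univ.elim_finite_subcover_image (c := id) hU.1
    (by rw [← hU.2, sUnion_eq_biUnion]; rfl)
  refine ⟨hfin.toFinset, by simpa using hT, univ_subset_iff.1 ?_⟩
  rw [hfin.coe_toFinset, sUnion_eq_biUnion]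
  exact hcov

lemma IsOpenCover.timeJoin {X : Type*} [TopologicalSpace X] {f : X → X} (hf : Continuous f)
    {U : Set (Set X)} (hU : IsOpenCover U) {n : ℕ} (t : Fin n → ℕ) :
    IsOpenCover (timeJoin f U t) := by
  refine ⟨?_, ?_⟩
  · rintro A ⟨u, hu, rfl⟩
    exact isOpen_iInter_of_finite fun i => (hU.1 _ (hu i)).preimage (hf.iterate _)
  · rw [eq_univ_iff_forall]
    intro x
    have : ∀ i, ∃ A ∈ U, f^[t i] x ∈ A := fun i => by
      have := hU.2.ge (mem_univ (f^[t i] x))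
      simpa using this
    choose u hu hxu using this
    exact ⟨_, ⟨u, hu, rfl⟩, mem_iInter.2 hxu⟩

/-- Suppose a relation `r` from `X` to `Y` is total and, along it, each member of the open cover
`ℬ` of the compact space `Y` is handled by at most `P` members of the cover `𝒜` of `X`.
Then `N(𝒜) ≤ N(ℬ) · P`. -/
lemma coverN_le_mul {X Y : Type*} [TopologicalSpace Y] [CompactSpace Y] {𝒜 : Set (Set X)}
    {ℬ : Set (Set Y)} (hℬ : IsOpenCover ℬ) (r : X → Y → Prop) (hr : ∀ x, ∃ y, r x y) (P : ℕ)
    (h : ∀ B ∈ ℬ, ∃ T : Finset (Set X), ↑T ⊆ 𝒜 ∧ T.card ≤ P ∧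
      ∀ x, (∃ y ∈ B, r x y) → ∃ A ∈ T, x ∈ A) :
    coverN 𝒜 ≤ coverN ℬ * P := by
  classical
  obtain ⟨V₀, h₀, h₀'⟩ := hℬ.exists_finset
  have hne : {n | ∃ V : Finset (Set Y), ↑V ⊆ ℬ ∧
      ⋃₀ (V : Set (Set Y)) = univ ∧ V.card = n}.Nonempty := ⟨_, V₀, h₀, h₀', rfl⟩
  obtain ⟨V, hV, hVc, hcard⟩ := Nat.sInf_mem hne
  change V.card = coverN ℬ at hcard
  choose! T hT1 hT2 hT3 using h
  rw [← hcard]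
  refine (coverN_le (V.biUnion T) ?_ ?_).trans
    (Finset.card_biUnion_le_card_mul _ _ _ fun B hB => hT2 B (hV hB))
  · intro A hA
    obtain ⟨B, hB, hAB⟩ := Finset.mem_biUnion.1 hA
    exact hT1 B (hV hB) hAB
  · rw [eq_univ_iff_forall]
    intro x
    obtain ⟨y, hy⟩ := hr x
    obtain ⟨B, hB, hyB⟩ := hVc.ge (mem_univ y)
    obtain ⟨A, hA, hxA⟩ := hT3 B (hV hB) x ⟨y, hyB, hy⟩
    exact ⟨A, Finset.mem_biUnion.2 ⟨B, hB, hA⟩, hxA⟩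

lemma tendsto_log_poly (c K : ℕ) :
    Tendsto (fun n : ℕ => Real.log (c * ((n : ℝ) + 1) ^ K) / n) atTop (𝓝 0) := by
  rcases Nat.eq_zero_or_pos c with rfl | hc
  · simp
  have h1 : Tendsto (fun n : ℕ => Real.log c / (n : ℝ)) atTop (𝓝 0) :=
    tendsto_const_nhds.div_atTop tendsto_natCast_atTop_atTop
  have h2 : Tendsto (fun n : ℕ => Real.log ((n : ℝ) + 1) / n) atTop (𝓝 0) := by
    have h3 : Tendsto (fun x : ℝ => Real.log x / x) atTop (𝓝 0) := by
      simpa using Real.isLittleO_log_id_atTop.tendsto_div_nhds_zero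
    have h4 : Tendsto (fun n : ℕ => Real.log ((n : ℝ) + 1) / ((n : ℝ) + 1)) atTop (𝓝 0) :=
      h3.comp (tendsto_atTop_add_const_right _ _ tendsto_natCast_atTop_atTop)
    have h5 : Tendsto (fun n : ℕ => 1 + 1 / (n : ℝ)) atTop (𝓝 (1 + 0)) :=
      tendsto_const_nhds.add (tendsto_const_nhds.div_atTop tendsto_natCast_atTop_atTop)
    have h6 := h4.mul h5
    rw [zero_mul] at h6
    refine h6.congr' ?_
    filter_upwards [eventually_gt_atTop 0] with n hn
    have : (n : ℝ) ≠ 0 := by positivity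
    field_simp
  have h7 := h1.add (h2.const_mul (K : ℝ))
  simp only [mul_zero, add_zero] at h7
  refine h7.congr fun n => ?_
  rw [Real.log_mul (by positivity) (by positivity), Real.log_pow]
  ring

/-- Vanishing of sequence entropy passes along a polynomially bounded comparison. -/
lemma seqEnt_zero_of_le {X Y : Type*} {f : X → X} {g : Y → Y} {a b : ℕ → ℕ} {U : Set (Set X)}
    {V : Set (Set Y)} (hf : seqEnt f a U = 0) (c K : ℕ)
    (h : ∀ n : ℕ, coverN (timeJoin g V (fun i : Fin n => b i)) ≤
      coverN (timeJoin f U (fun i : Fin n => a i)) * (c * (n + 1) ^ K)) :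
    seqEnt g b V = 0 := by
  have hten : Tendsto (fun n : ℕ => ENNReal.ofReal
      (Real.log (coverN (timeJoin f U (fun i : Fin n => a (i : ℕ)))) / n)) atTop (𝓝 0) :=
    tendsto_of_le_liminf_of_limsup_le (zero_le) hf.le
  have hp : Tendsto (fun n : ℕ => ENNReal.ofReal
      (Real.log (c * ((n : ℝ) + 1) ^ K) / n)) atTop (𝓝 0) := by
    simpa using ENNReal.tendsto_ofReal (tendsto_log_poly c K)
  have hsum := hten.add hp
  rw [add_zero] at hsum
  refine (tendsto_of_tendsto_of_tendsto_of_le_of_le tendsto_const_nhds hsum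
    (fun _ => zero_le) fun n => ?_).limsup_eq
  set N := coverN (timeJoin g V (fun i : Fin n => b i))
  set M := coverN (timeJoin f U (fun i : Fin n => a i))
  have hN : N ≤ M * (c * (n + 1) ^ K) := h n
  rcases Nat.eq_zero_or_pos N with h0 | h0
  · simp [h0]
  have hM : M ≠ 0 := by rintro h1; simp [h1] at hN; omega
  have hc : c ≠ 0 := by rintro h1; simp [h1] at hN; omega
  refine le_trans (ENNReal.ofReal_le_ofReal ?_) ENNReal.ofReal_add_le
  rw [← add_div]
  gcongr
  rw [← Real.log_mul (by positivity) (by positivity)]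
  apply Real.log_le_log (by positivity)
  exact_mod_cast hN

/-- Nullness passes to factors. -/
lemma IsNull.factor {X Y : Type*} [TopologicalSpace X] [TopologicalSpace Y] [CompactSpace Y]
    {f : X → X} {g : Y → Y} (hg : Continuous g) {π : Y → X} (hπ : Continuous π)
    (hsurj : Function.Surjective π) (hsemi : Function.Semiconj π g f) (h : IsNull g) :
    IsNull f := by
  intro a ha hpos U hU
  have hV : IsOpenCover ((fun A => π ⁻¹' A) '' U) := by
    refine ⟨?_, ?_⟩
    · rintro _ ⟨A, hA, rfl⟩
      exact (hU.1 A hA).preimage hπ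
    · rw [sUnion_image, ← preimage_iUnion₂, ← sUnion_eq_biUnion, hU.2, preimage_univ]
  refine seqEnt_zero_of_le (h a ha hpos _ hV) 1 0 fun n => ?_
  simp only [pow_zero, mul_one]
  refine (coverN_le_mul (hV.timeJoin hg _) (fun x y => π y = x) hsurj 1 ?_).trans (mul_one _).le
  rintro _ ⟨u, hu, rfl⟩
  choose v hv hvu using hu
  refine ⟨{⋂ i : Fin n, f^[a i] ⁻¹' v i}, by simpa using ⟨v, hv, rfl⟩, by simp, ?_⟩
  rintro _ ⟨y, hy, rfl⟩
  refine ⟨_, Finset.mem_singleton_self _, ?_⟩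
  rw [mem_iInter] at hy ⊢
  intro i
  have := hy i
  rw [← hvu i] at this
  have h2 := (hsemi.iterate_right (a i)).eq y
  simp only [mem_preimage] at this ⊢
  rwa [← h2]

/-- If `G` factors through `π`, say `G = h ∘ π` with `π ∘ h = f`, nullness of `f` passes to `G`:
the position of `π z` at time `t - 1` determines `G^t z`. -/
lemma IsNull.of_factor_through {S I : Type*} [TopologicalSpace S] [CompactSpace S]
    [TopologicalSpace I] [CompactSpace I] {f : S → S} (hf : Continuous f) {G : I → I}
    {π : I → S} {h : S → I} (hh : Continuous h) (hG : ∀ z, G z = h (π z))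
    (hsemi : Function.Semiconj π G f) (hnull : IsNull f) : IsNull G := by
  classical
  intro a ha hpos U hU
  obtain ⟨U₀, hU₀, hU₀c⟩ := hU.exists_finset
  have hV : IsOpenCover ((fun A => h ⁻¹' A) '' U) := by
    refine ⟨?_, ?_⟩
    · rintro _ ⟨A, hA, rfl⟩
      exact (hU.1 A hA).preimage hh
    · rw [sUnion_image, ← preimage_iUnion₂, ← sUnion_eq_biUnion, hU.2, preimage_univ]
  -- drop the first time, so that all shifted times stay positive
  have ha' : StrictMono fun i => a (i + 1) - 1 := by
    intro i j hij
    have := ha (Nat.succ_lt_succ hij)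
    have := hpos (i + 1)
    simp only [Nat.succ_eq_add_one] at *
    omega
  have hpos' : ∀ i, 0 < a (i + 1) - 1 := by
    intro i
    have := ha (Nat.succ_pos i)
    have := hpos 0
    simp only [Nat.succ_eq_add_one] at *
    omega
  refine seqEnt_zero_of_le (hnull _ ha' hpos' _ hV) U₀.card 0 fun n => ?_
  simp only [pow_zero, mul_one]
  refine coverN_le_mul (hV.timeJoin hf _) (fun z s => π z = s) (fun z => ⟨_, rfl⟩) _ ?_
  rintro _ ⟨u, hu, rfl⟩
  choose v hv hvu using hu
  let w : Set I → Fin n → Set I := fun C i =>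
    if hi : (i : ℕ) = 0 then C else v ⟨i - 1, by omega⟩
  refine ⟨U₀.image fun C => ⋂ i : Fin n, G^[a i] ⁻¹' w C i, ?_, Finset.card_image_le, ?_⟩
  · intro A hA
    obtain ⟨C, hC, rfl⟩ := Finset.mem_image.1 hA
    refine ⟨w C, fun i => ?_, rfl⟩
    by_cases hi : (i : ℕ) = 0
    · simpa [w, hi] using hU₀ hC
    · simpa [w, hi] using hv _
  · rintro z ⟨_, hz, rfl⟩
    obtain ⟨C, hC, hzC⟩ := hU₀c.ge (mem_univ (G^[a 0] z))
    refine ⟨_, Finset.mem_image_of_mem _ hC, ?_⟩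
    rw [mem_iInter] at hz ⊢
    intro i
    by_cases hi : (i : ℕ) = 0
    · simpa [w, hi] using hzC
    · have h1 := hz ⟨i - 1, by omega⟩
      rw [← hvu] at h1
      simp only [mem_preimage, w, hi, dite_false] at h1 ⊢
      rw [Nat.sub_add_cancel (Nat.pos_of_ne_zero hi)] at h1
      rw [← Nat.sub_add_cancel (hpos i), Function.iterate_succ_apply', hG,
        (hsemi.iterate_right _).eq]
      exact h1

/-! ### A horseshoe excludes nullness -/

/-- Two disjoint closed sets, each stretched over both by the same iterate, realise all `2ⁿ`
itineraries along the multiples of that iterate, and each member of the `n`-fold join of the cover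
by their complements contains points of at most one itinerary. -/
lemma not_null_of_horseshoe {S : Type*} [TopologicalSpace S] [CompactSpace S] {f : S → S}
    (hf : Continuous f) {J : Bool → Set S} (hcl : ∀ c, IsClosed (J c)) (hne : ∀ c, (J c).Nonempty)
    (hdisj : Disjoint (J true) (J false)) {N : ℕ} (hN : 0 < N)
    (hcov : ∀ c d, J c ⊆ f^[N] '' J d) : ¬ IsNull f := by
  classical
  intro hnull
  have hU : IsOpenCover (range fun c => (J c)ᶜ) := by
    refine ⟨?_, ?_⟩
    · rintro _ ⟨c, rfl⟩
      exact (hcl c).isOpen_compl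
    · rw [eq_univ_iff_forall]
      intro x
      by_cases hx : x ∈ J true
      · exact ⟨_, ⟨false, rfl⟩, fun h => hdisj.le_bot ⟨hx, h⟩⟩
      · exact ⟨_, ⟨true, rfl⟩, hx⟩
  have hmono : StrictMono fun i : ℕ => N * (i + 1) := fun i j hij =>
    Nat.mul_lt_mul_of_pos_left (Nat.succ_lt_succ hij) hN
  have hit : ∀ (n : ℕ) (s : ℕ → Bool) (c : Bool),
      ∃ z ∈ J c, ∀ i < n, f^[N * (i + 1)] z ∈ J (s i) := by
    intro n
    induction n with
    | zero => exact fun s c => ⟨_, (hne c).some_mem, fun i hi => absurd hi (Nat.not_lt_zero _)⟩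
    | succ n ih =>
      intro s c
      obtain ⟨y, hy, hyi⟩ := ih (fun i => s (i + 1)) (s 0)
      obtain ⟨z, hz, rfl⟩ := hcov (s 0) c hy
      refine ⟨z, hz, fun i hi => ?_⟩
      cases i with
      | zero => simpa using hy
      | succ i =>
        have := hyi i (by omega)
        rw [← Function.iterate_add_apply] at this
        rwa [show N * (i + 1 + 1) = N * (i + 1) + N by ring]
  have hge : ∀ n : ℕ, 2 ^ n ≤ coverN (timeJoin f (range fun c => (J c)ᶜ)
      (fun i : Fin n => N * ((i : ℕ) + 1))) := by
    intro n
    have hjoin := hU.timeJoin hf (fun i : Fin n => N * ((i : ℕ) + 1))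
    obtain ⟨V₀, h₀, h₀'⟩ := hjoin.exists_finset
    refine le_csInf ⟨_, V₀, h₀, h₀', rfl⟩ ?_
    rintro _ ⟨V, hV, hVc, rfl⟩
    have hz : ∀ s : Fin n → Bool, ∃ z, ∀ i : Fin n, f^[N * ((i : ℕ) + 1)] z ∈ J (s i) := by
      intro s
      obtain ⟨z, -, hz⟩ := hit n (fun i => if h : i < n then s ⟨i, h⟩ else true) true
      refine ⟨z, fun i => ?_⟩
      have := hz i i.2
      simpa using this
    choose z hz using hz
    have hA : ∀ s, ∃ A ∈ V, z s ∈ A := fun s => hVc.ge (mem_univ (z s))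
    choose A hAV hzA using hA
    have hinj : Function.Injective A := by
      intro s s' hss
      obtain ⟨u, hu, hAu⟩ := hV (hAV s)
      have h1 := hzA s
      have h2 := hzA s'
      rw [← hss] at h2
      rw [hAu, mem_iInter] at h1 h2
      funext i
      obtain ⟨c, hc⟩ := hu i
      have h1i : f^[N * ((i : ℕ) + 1)] (z s) ∉ J c := by
        have := h1 i
        rw [← hc] at this; exact this
      have h2i : f^[N * ((i : ℕ) + 1)] (z s') ∉ J c := by
        have := h2 i
        rw [← hc] at this; exact this
      have e1 : s i ≠ c := fun h => h1i (h ▸ hz s i)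
      have e2 : s' i ≠ c := fun h => h2i (h ▸ hz s' i)
      cases h : s i <;> cases h' : s' i <;> cases c <;> simp_all
    calc 2 ^ n = (Finset.univ : Finset (Fin n → Bool)).card := by simp
      _ = (Finset.univ.image A).card := (Finset.card_image_of_injective _ hinj).symm
      _ ≤ V.card := Finset.card_le_card fun B hB => by
        obtain ⟨s, -, rfl⟩ := Finset.mem_image.1 hB
        exact hAV s
  have h0 := hnull _ hmono (fun i => by positivity) _ hU
  have hlow : ENNReal.ofReal (Real.log 2) ≤ seqEnt f (fun i : ℕ => N * (i + 1))
      (range fun c => (J c)ᶜ) := by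
    refine le_limsup_of_frequently_le (Eventually.frequently ?_)
    filter_upwards [eventually_gt_atTop 0] with n hn
    apply ENNReal.ofReal_le_ofReal
    rw [le_div_iff₀ (by exact_mod_cast hn), mul_comm, ← Real.log_pow]
    exact Real.log_le_log (by positivity) (by exact_mod_cast hge n)
  rw [h0] at hlow
  have := ENNReal.ofReal_eq_zero.1 (le_antisymm hlow (zero_le))
  linarith [Real.log_pos one_lt_two]

/-! ### Lifting nullness when fibres are crossed in one direction only -/

/-- Suppose the preimage of some neighbourhood of each point splits into two small sets `A`, `B`
such that no even iterate leads from `A` to `B`. Then, over a prescribed itinerary of `n` small sets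
in the factor, the choice between `B` and `A` switches at most once for each small set and each
parity of the time, so that the fibre itineraries grow only polynomially. -/
lemma IsNull.lift {S I : Type*} [TopologicalSpace S] [CompactSpace S] [TopologicalSpace I]
    {f : S → S} (hf : Continuous f) {G : I → I} {π : I → S} (hsemi : Function.Semiconj π G f)
    (hnull : IsNull f)
    (H : ∀ U : Set (Set I), IsOpenCover U → ∀ s : S, ∃ w : Set S, IsOpen w ∧ s ∈ w ∧
      ∃ A B : Set I, (∃ u ∈ U, A ⊆ u) ∧ (∃ u ∈ U, B ⊆ u) ∧ π ⁻¹' w ⊆ A ∪ B ∧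
        ∀ z ∈ A, ∀ m : ℕ, G^[2 * m] z ∉ B) : IsNull G := by
  classical
  intro a ha hpos U hU
  choose w hwo hsw A B hA hB hAB hone using H U hU
  choose uA huA hAuA using hA
  choose uB huB hBuB using hB
  obtain ⟨T, hT⟩ := isCompact_univ.elim_finite_subcover w hwo
    (fun s _ => mem_iUnion.2 ⟨s, hsw s⟩)
  have hW : IsOpenCover (w '' (T : Set S)) := by
    refine ⟨?_, ?_⟩
    · rintro _ ⟨s, -, rfl⟩
      exact hwo s
    · rw [sUnion_image]
      exact univ_subset_iff.1 hT
  refine seqEnt_zero_of_le (hnull a ha hpos _ hW) 1 (T.card * 2) fun n => ?_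
  rw [one_mul]
  refine coverN_le_mul (hW.timeJoin hf _) (fun z s => π z = s) (fun z => ⟨_, rfl⟩) _ ?_
  rintro _ ⟨v, hv, rfl⟩
  choose σ hσT hσ using hv
  let κ : Fin n → T × Fin 2 := fun i => (⟨σ i, hσT i⟩, ⟨a i % 2, Nat.mod_lt _ two_pos⟩)
  let u : (T × Fin 2 → Fin (n + 1)) → Fin n → Set I := fun θ i =>
    if (i : ℕ) < θ (κ i) then uB (σ i) else uA (σ i)
  refine ⟨Finset.univ.image fun θ => ⋂ i : Fin n, G^[a i] ⁻¹' u θ i, ?_, ?_, ?_⟩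
  · intro C hC
    obtain ⟨θ, -, rfl⟩ := Finset.mem_image.1 hC
    refine ⟨u θ, fun i => ?_, rfl⟩
    simp only [u]
    split_ifs
    · exact huB _
    · exact huA _
  · refine Finset.card_image_le.trans ?_
    simp
  · rintro z ⟨_, hz, rfl⟩
    rw [mem_iInter] at hz
    have hmem : ∀ i : Fin n, G^[a i] z ∈ A (σ i) ∪ B (σ i) := by
      intro i
      apply hAB
      have := hz i
      rw [← hσ i] at this
      simp only [mem_preimage] at this ⊢
      rwa [(hsemi.iterate_right _).eq]
    -- the threshold of a key is the first time in `A`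
    have hθ : ∀ k : T × Fin 2, ∃ θ : Fin (n + 1), ∀ i : Fin n, κ i = k →
        ((i : ℕ) < θ → G^[a i] z ∈ B (σ i)) ∧ ((θ : ℕ) ≤ i → G^[a i] z ∈ A (σ i)) := by
      intro k
      by_cases hex : ∃ j : ℕ, ∃ hj : j < n, κ ⟨j, hj⟩ = k ∧ G^[a j] z ∈ A (σ ⟨j, hj⟩)
      · obtain ⟨hj, hjk, hjA⟩ := Nat.find_spec hex
        refine ⟨⟨Nat.find hex, by omega⟩, fun i hi => ⟨fun hlt => ?_, fun hle => ?_⟩⟩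
        · refine (hmem i).resolve_left fun hiA => Nat.find_min hex hlt ⟨i.2, hi, hiA⟩
        · refine (hmem i).resolve_right fun hiB => ?_
          have hkk := hjk.trans hi.symm
          simp only [κ, Prod.mk.injEq, Subtype.mk.injEq, Fin.mk.injEq] at hkk
          have hle' : a (Nat.find hex) ≤ a i := ha.monotone hle
          refine hone _ _ hjA ((a i - a (Nat.find hex)) / 2) ?_
          rw [← Function.iterate_add_apply, hkk.1]
          convert hiB using 2
          have := hkk.2
          omega
      · refine ⟨Fin.last n, fun i hi => ⟨fun _ => ?_, fun hle => ?_⟩⟩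
        · exact (hmem i).resolve_left fun hiA => hex ⟨i, i.2, hi, hiA⟩
        · exact absurd i.2 (not_lt.2 hle)
    choose θ hθ using hθ
    refine ⟨_, Finset.mem_image_of_mem _ (Finset.mem_univ θ), ?_⟩
    rw [mem_iInter]
    intro i
    simp only [mem_preimage, u]
    split_ifs with hi
    · exact hBuB _ ((hθ _ i rfl).1 hi)
    · exact hAuA _ ((hθ _ i rfl).2 (not_lt.1 hi))

/-! ### The projection and the degree of a lifting -/

lemma continuous_projS : Continuous projS := AddCircle.continuous_mk' 1

lemma projS_add_one (x : ℝ) : projS (x + 1) = projS x := AddCircle.coe_add_period 1 x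

lemma projS_eq_iff {x y : ℝ} : projS x = projS y ↔ ∃ n : ℤ, y = x + n := by
  constructor
  · intro h
    have h2 : ((y - x : ℝ) : Circle1) = 0 := by
      rw [AddCircle.coe_sub]
      exact sub_eq_zero.2 h.symm
    obtain ⟨n, hn⟩ := (AddCircle.coe_eq_zero_iff (1 : ℝ)).1 h2
    exact ⟨n, by simp at hn; linarith⟩
  · rintro ⟨n, rfl⟩
    simp [projS]

lemma exists_rep (a : ℝ) (s : Circle1) : ∃ x, a ≤ x ∧ x < a + 1 ∧ projS x = s := by
  obtain ⟨y, rfl⟩ := QuotientAddGroup.mk_surjective s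
  refine ⟨y + (-⌊y - a⌋ : ℤ), ?_, ?_, (projS_eq_iff.2 ⟨_, rfl⟩).symm⟩
  · push_cast; linarith [Int.floor_le (y - a)]
  · push_cast; linarith [Int.lt_floor_add_one (y - a)]

/-- A lifting of a circle map has a degree. -/
lemma IsLift.exists_deg {f : Circle1 → Circle1} {F : ℝ → ℝ} (hF : IsLift f F) :
    ∃ d : ℤ, ∀ x, F (x + 1) = F x + d := by
  have hshift : ∀ x, ∃ n : ℤ, F (x + 1) = F x + n := fun x =>
    projS_eq_iff.1 (by rw [hF.2, hF.2, projS_add_one])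
  obtain ⟨d, hd⟩ := hshift 0
  refine ⟨d, fun x => ?_⟩
  have hF1 := hF.1
  have hdisc : IsDiscrete (range ((↑) : ℤ → ℝ)) :=
    Int.isClosedEmbedding_coe_real.isInducing.isDiscrete_range
  have := isPreconnected_univ.constant_of_mapsTo (f := fun x => F (x + 1) - F x) hdisc
    (by fun_prop) (fun y _ => by
      obtain ⟨n, hn⟩ := hshift y
      exact ⟨n, by simp [hn]⟩) (mem_univ x) (mem_univ 0)
  linarith [hd]

/-! ### Degree `±1`: no two points of a fibre are crossed both ways -/

/-- A horseshoe of a lifting of `f²` in a fundamental domain projects to the circle. -/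
lemma not_horse_of_null {f : Circle1 → Circle1} (hf : Continuous f) (hnull : IsNull f)
    {g : ℝ → ℝ} {a : ℝ} (hg : Function.Semiconj projS g f^[2]) : ¬ Horse g a (a + 1) := by
  rintro ⟨c₁, d₁, c₂, d₂, m, hm, h1, h2, h3, h4, h5, h6, h7, h8⟩
  let K : Bool → Set ℝ := fun c => if c then Icc c₁ d₁ else Icc c₂ d₂
  have hsub : ∀ c, K c ⊆ Icc c₁ d₂ := by
    intro c
    cases c
    · exact Icc_subset_Icc_left (h2.trans h3.le)
    · exact Icc_subset_Icc_right (h3.le.trans h4)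
  have hcov : ∀ d, Icc c₁ d₂ ⊆ g^[m] '' K d := by
    intro d
    cases d
    · exact h8
    · exact h7
  refine not_null_of_horseshoe hf (J := fun c => projS '' K c) (fun c => ?_) (fun c => ?_) ?_
    (N := 2 * m) (by omega) ?_ hnull
  · refine (IsCompact.image ?_ continuous_projS).isClosed
    cases c <;> exact isCompact_Icc
  · refine Nonempty.image _ ?_
    cases c
    · exact nonempty_Icc.2 h4
    · exact nonempty_Icc.2 h2
  · rw [disjoint_left]
    rintro _ ⟨x, hx, rfl⟩ ⟨y, hy, hxy⟩
    obtain ⟨n, hn⟩ := projS_eq_iff.1 hxy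
    have hx' : x ∈ Icc c₁ d₁ := hx
    have hy' : y ∈ Icc c₂ d₂ := hy
    have e1 : (n : ℝ) < 0 := by linarith [hx'.2, hy'.1]
    have e2 : (-1 : ℝ) < n := by
      rcases h6 with h6 | h6 <;> linarith [hx'.1, hy'.2]
    have e1' : n < 0 := by exact_mod_cast e1
    have e2' : -1 < n := by exact_mod_cast e2
    omega
  · rintro c d _ ⟨x, hx, rfl⟩
    obtain ⟨y, hy, rfl⟩ := hcov d (hsub c hx)
    refine ⟨projS y, mem_image_of_mem _ hy, ?_⟩
    rw [Function.iterate_mul]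
    exact ((hg.iterate_right m).eq y).symm

/-- If `g` preserves both end pieces of `[a,b]` and has no horseshoe when these pieces are single
points, then two points `x` and `x + 1` have neighbourhoods that orbits cross between in one
direction only. -/
lemma one_way {g : ℝ → ℝ} {a b x : ℝ} (hg : Continuous g) (hab1 : 1 ≤ b - a) (hab2 : b - a < 2)
    (hmaps : MapsTo g (Icc a b) (Icc a b)) (hl : MapsTo g (Icc a (b - 1)) (Icc a (b - 1)))
    (hr : MapsTo g (Icc (a + 1) b) (Icc (a + 1) b)) (hno : b = a + 1 → ¬ Horse g a b)
    (hx : a ≤ x) (hxb : x + 1 ≤ b) :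
    ∃ ε > 0, (∀ z ∈ Icc a b, |z - x| < ε → ∀ m : ℕ, ¬ |g^[m] z - (x + 1)| < ε) ∨
      (∀ z ∈ Icc a b, |z - (x + 1)| < ε → ∀ m : ℕ, ¬ |g^[m] z - x| < ε) := by
  rcases hab1.lt_or_eq with hlt | heq
  · rcases hx.lt_or_eq with hax | rfl
    · -- points near `x + 1` stay in `[a+1,b]`, which misses `x`
      refine ⟨min (x - a) (a + 1 - x), lt_min (by linarith) (by linarith), Or.inr ?_⟩
      intro z hz hzx m hm
      have e1 := (abs_lt.1 (hzx.trans_le (min_le_left _ _))).1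
      have e2 := (abs_lt.1 (hm.trans_le (min_le_right _ _))).2
      have := (hr.iterate m (⟨by linarith, hz.2⟩ : z ∈ Icc (a + 1) b)).1
      linarith
    · -- points near `a` stay in `[a,b-1]`, which misses `a + 1`
      refine ⟨min (b - 1 - a) (a + 2 - b), lt_min (by linarith) (by linarith), Or.inl ?_⟩
      intro z hz hzx m hm
      have e1 := (abs_lt.1 (hzx.trans_le (min_le_left _ _))).2
      have e2 := (abs_lt.1 (hm.trans_le (min_le_right _ _))).1
      have := (hl.iterate m (⟨hz.1, by linarith⟩ : z ∈ Icc a (b - 1))).2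
      linarith
  · have hb : b = a + 1 := by linarith
    have hxa : x = a := by linarith
    subst hb hxa
    have hfa : g x = x := by
      have := hl (⟨le_rfl, by linarith⟩ : x ∈ Icc x (x + 1 - 1))
      exact le_antisymm (by linarith [this.2]) this.1
    have hfb : g (x + 1) = x + 1 := by
      have := hr (⟨le_rfl, le_rfl⟩ : x + 1 ∈ Icc (x + 1) (x + 1))
      exact le_antisymm this.2 this.1
    by_contra! hcon
    refine hno rfl (Crossing.horse ⟨by linarith, hg, hmaps, hfa, hfb, ?_, ?_⟩)
    · intro p q hp hq
      obtain ⟨⟨z, hz, hzx, m, hm⟩, -⟩ := hcon (min (1 / 2) (min (p - x) (x + 1 - q)))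
        (lt_min (by norm_num) (lt_min (by linarith) (by linarith)))
      simp only [lt_min_iff, abs_lt] at hzx hm
      refine ⟨z, m, hz.1.lt_of_ne ?_, by linarith, by linarith⟩
      rintro rfl
      rw [iterate_fix hfa] at hm
      linarith
    · intro p q hp hq
      obtain ⟨-, ⟨z, hz, hzx, m, hm⟩⟩ := hcon (min (1 / 2) (min (p - x) (x + 1 - q)))
        (lt_min (by norm_num) (lt_min (by linarith) (by linarith)))
      simp only [lt_min_iff, abs_lt] at hzx hm
      refine ⟨z, m, by linarith, hz.2.lt_of_ne ?_, by linarith⟩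
      rintro rfl
      rw [iterate_fix hfb] at hm
      linarith

/-- The case of degree `±1`, where `F²` preserves both end pieces of `[a,b]`. -/
lemma null_of_end_pieces {f : Circle1 → Circle1} (hf : Continuous f) {F : ℝ → ℝ} {a b : ℝ}
    (hF : IsLift f F) (hab1 : 1 ≤ b - a) (hab2 : b - a < 2)
    (hmaps : MapsTo F (Icc a b) (Icc a b))
    (hl : MapsTo (F ∘ F) (Icc a (b - 1)) (Icc a (b - 1)))
    (hr : MapsTo (F ∘ F) (Icc (a + 1) b) (Icc (a + 1) b))
    (G : ↥(Icc a b) → ↥(Icc a b)) (hG : ∀ z : ↥(Icc a b), (G z : ℝ) = F (z : ℝ))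
    (hnull : IsNull f) : IsNull G := by
  have hsemiF : Function.Semiconj projS F f := hF.2
  have hsemi : Function.Semiconj (fun z : ↥(Icc a b) => projS z) G f := fun z => by
    simp only [hG, hF.2]
  have hcoe : Function.Semiconj (Subtype.val : ↥(Icc a b) → ℝ) G F := hG
  have hG2 : ∀ (z : ↥(Icc a b)) (m : ℕ), ((G^[2 * m] z : ↥(Icc a b)) : ℝ) = (F ∘ F)^[m] z := by
    intro z m
    rw [(hcoe.iterate_right _).eq, Function.iterate_mul]
    rfl
  have hno : b = a + 1 → ¬ Horse (F ∘ F) a b := by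
    rintro rfl
    exact not_horse_of_null hf hnull (hsemiF.iterate_right 2)
  have hπ : Continuous (fun z : ↥(Icc a b) => projS z) :=
    continuous_projS.comp continuous_subtype_val
  refine IsNull.lift hf hsemi hnull fun U hU s => ?_
  obtain ⟨x, hax, hxa, rfl⟩ := exists_rep a s
  -- a neighbourhood of the fibre contains the preimage of a neighbourhood of the point
  have htube : ∀ O : Set ↥(Icc a b), IsOpen O → (∀ z : ↥(Icc a b), projS z = projS x → z ∈ O) →
      ∃ w : Set Circle1, IsOpen w ∧ projS x ∈ w ∧ (fun z : ↥(Icc a b) => projS z) ⁻¹' w ⊆ O := by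
    intro O hO hfib
    refine ⟨((fun z : ↥(Icc a b) => projS z) '' Oᶜ)ᶜ,
      (hπ.isClosedMap _ hO.isClosed_compl).isOpen_compl, ?_, ?_⟩
    · rintro ⟨z, hz, hzx⟩
      exact hz (hfib z hzx)
    · intro z hz
      by_contra hzO
      exact hz ⟨z, hzO, rfl⟩
  have hfib : ∀ z : ↥(Icc a b), projS z = projS x → (z : ℝ) = x ∨ (z : ℝ) = x + 1 := by
    intro z hz
    obtain ⟨n, hn⟩ := projS_eq_iff.1 hz.symm
    have e1 : (-1 : ℝ) < n := by linarith [z.2.1]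
    have e2 : (n : ℝ) < 2 := by linarith [z.2.2]
    have e1' : -1 < n := by exact_mod_cast e1
    have e2' : n < 2 := by exact_mod_cast e2
    obtain rfl | rfl : n = 0 ∨ n = 1 := by omega
    · left; simpa using hn
    · right; simpa using hn
  obtain ⟨u, huU, hxu⟩ := hU.2.ge (mem_univ (⟨x, hax, by linarith⟩ : ↥(Icc a b)))
  by_cases hxb : x + 1 ≤ b
  · obtain ⟨v, hvU, hxv⟩ := hU.2.ge (mem_univ (⟨x + 1, by linarith, hxb⟩ : ↥(Icc a b)))
    obtain ⟨ε, hε, hone⟩ := one_way (hF.1.comp hF.1) hab1 hab2 (hmaps.comp hmaps) hl hr hno hax hxb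
    let A : Set ↥(Icc a b) := u ∩ {z | |(z : ℝ) - x| < ε}
    let B : Set ↥(Icc a b) := v ∩ {z | |(z : ℝ) - (x + 1)| < ε}
    have hA : IsOpen A := (hU.1 u huU).inter (isOpen_lt (by fun_prop) (by fun_prop))
    have hB : IsOpen B := (hU.1 v hvU).inter (isOpen_lt (by fun_prop) (by fun_prop))
    obtain ⟨w, hw, hxw, hwAB⟩ := htube (A ∪ B) (hA.union hB) (by
      intro z hz
      rcases hfib z hz with h | h
      · left
        obtain rfl : z = ⟨x, hax, by linarith⟩ := Subtype.ext h
        exact ⟨hxu, by simpa using hε⟩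
      · right
        obtain rfl : z = ⟨x + 1, by linarith, hxb⟩ := Subtype.ext h
        exact ⟨hxv, by simpa using hε⟩)
    refine ⟨w, hw, hxw, ?_⟩
    rcases hone with hone | hone
    · refine ⟨A, B, ⟨u, huU, inter_subset_left⟩, ⟨v, hvU, inter_subset_left⟩, hwAB, ?_⟩
      intro z hz m hm
      have := hm.2
      simp only [mem_ofPred_eq, hG2] at this
      exact hone z z.2 hz.2 m this
    · refine ⟨B, A, ⟨v, hvU, inter_subset_left⟩, ⟨u, huU, inter_subset_left⟩,
        union_comm A B ▸ hwAB, ?_⟩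
      intro z hz m hm
      have := hm.2
      simp only [mem_ofPred_eq, hG2] at this
      exact hone z z.2 hz.2 m this
  · obtain ⟨w, hw, hxw, hwA⟩ := htube u (hU.1 u huU) (by
      intro z hz
      rcases hfib z hz with h | h
      · obtain rfl : z = ⟨x, hax, by linarith⟩ := Subtype.ext h
        exact hxu
      · exact absurd (h ▸ z.2.2) hxb)
    exact ⟨w, hw, hxw, u, ∅, ⟨u, huU, subset_rfl⟩, ⟨u, huU, empty_subset _⟩, by simpa using hwA,
      fun _ _ _ h => h⟩

/-- The case of degree `0`, where `F` factors through the circle. -/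
lemma null_of_deg_zero {f : Circle1 → Circle1} (hf : Continuous f) {F : ℝ → ℝ} {a b : ℝ}
    (hF : IsLift f F) (hab1 : 1 ≤ b - a) (hmaps : MapsTo F (Icc a b) (Icc a b))
    (hper : ∀ x, F (x + 1) = F x)
    (G : ↥(Icc a b) → ↥(Icc a b)) (hG : ∀ z : ↥(Icc a b), (G z : ℝ) = F (z : ℝ))
    (hnull : IsNull f) : IsNull G := by
  have hP : Function.Periodic F 1 := hper
  have hlift : ∀ x, hP.lift (projS x) = F x := fun x => hP.lift_coe x
  have hmem : ∀ s, hP.lift s ∈ Icc a b := by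
    intro s
    obtain ⟨x, h1, h2, rfl⟩ := exists_rep a s
    rw [hlift]
    exact hmaps ⟨h1, by linarith⟩
  have hc : Continuous (hP.lift : Circle1 → ℝ) := hF.1.quotient_lift _
  refine hnull.of_factor_through hf (π := fun z : ↥(Icc a b) => projS z)
    (h := fun s => ⟨hP.lift s, hmem s⟩) (hc.subtype_mk _) (fun z => ?_) (fun z => ?_)
  · exact Subtype.ext (by simp only [hG, hlift])
  · simp only [hG, hF.2]

/-- `(𝕊,f)` is topological null iff `(I, F|_I)` is topological null.
Here `G` is the restriction of the lifting `F` to the invariant interval `I = [a,b]`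
provided by the lifting lemma. -/
theorem circle_null_iff_lift_null (f : Circle1 → Circle1) (hf : Continuous f)
    (h0 : topEnt f = 0) (hfix : ∃ z, f z = z)
    (F : ℝ → ℝ) (a b : ℝ) (hF : IsLift f F)
    (hab1 : 1 ≤ b - a) (hab2 : b - a < 2) (hmaps : MapsTo F (Icc a b) (Icc a b))
    (hdeg0 : (∀ x : ℝ, F (x + 1) = F x) → b - a = 1)
    (hdeg1 : (∀ x : ℝ, F (x + 1) = F x + 1) →
      F '' Icc a b = Icc a b ∧ MapsTo F (Icc a (b - 1)) (Icc a (b - 1)) ∧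
        MapsTo F (Icc (a + 1) b) (Icc (a + 1) b))
    (hdegm1 : (∀ x : ℝ, F (x + 1) = F x - 1) →
      F '' Icc a b = Icc a b ∧ MapsTo F (Icc a (b - 1)) (Icc (a + 1) b) ∧
        MapsTo F (Icc (a + 1) b) (Icc a (b - 1)))
    (G : ↥(Icc a b) → ↥(Icc a b)) (hG : ∀ z : ↥(Icc a b), (G z : ℝ) = F (z : ℝ)) :
    IsNull f ↔ IsNull G := by
  have hGc : Continuous G := by
    rw [continuous_induced_rng]
    exact (hF.1.comp continuous_subtype_val).congr fun z => (hG z).symm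
  constructor
  · intro hnull
    obtain ⟨d, hd⟩ := hF.exists_deg
    -- `F a` and `F (a + 1)` both lie in an interval of length less than `2`
    have h1 := hmaps (⟨le_rfl, by linarith⟩ : a ∈ Icc a b)
    have h2 := hmaps (⟨by linarith, by linarith⟩ : a + 1 ∈ Icc a b)
    rw [hd] at h2
    have e1 : (-2 : ℝ) < d := by linarith [h1.2, h2.1]
    have e2 : (d : ℝ) < 2 := by linarith [h1.1, h2.2]
    have e1' : -2 < d := by exact_mod_cast e1
    have e2' : d < 2 := by exact_mod_cast e2
    obtain rfl | rfl | rfl : d = -1 ∨ d = 0 ∨ d = 1 := by omega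
    · obtain ⟨-, hl, hr⟩ := hdegm1 fun x => by rw [hd]; push_cast; ring
      exact null_of_end_pieces hf hF hab1 hab2 hmaps (hr.comp hl) (hl.comp hr) G hG hnull
    · exact null_of_deg_zero hf hF hab1 hmaps (fun x => by rw [hd]; simp) G hG hnull
    · obtain ⟨-, hl, hr⟩ := hdeg1 fun x => by rw [hd]; push_cast; ring
      exact null_of_end_pieces hf hF hab1 hab2 hmaps (hl.comp hl) (hr.comp hr) G hG hnull
  · refine IsNull.factor hGc (π := fun z : ↥(Icc a b) => projS z)
      (continuous_projS.comp continuous_subtype_val) (fun s => ?_) (fun z => ?_)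
    · obtain ⟨x, h1, h2, rfl⟩ := exists_rep a s
      exact ⟨⟨x, h1, by linarith⟩, rfl⟩
    · simp only [hG, hF.2]
end
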